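/- Let m ∼ N(μ, Σ) on ℝⁿ with Σ positive definite, v a selection vector, y ∈ {-1,1}, z = y v'μ/√(v'Σv + 1), η = Φ(z), and let μ⁺ be the posterior mean μ + yΣv φ(z)/(η√(v'Σv+1)). Then the covariance of the probit-tilted posterior p(m) ∝ φ(m; μ, Σ)Φ(y v'm) equals Σ − (μ⁺ − μ)(μ⁺ − μ)' − y Σv v'Σ · φ(z)(v'μ)/(η (v'Σv + 1)^{3/2}). -/

import Mathlib

open MeasureTheory Matrix

noncomputable def stdPdf (x : ℝ) : ℝ :=
  (Real.sqrt (2 * Real.pi))⁻¹ * Real.exp (-x ^ 2 / 2)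

noncomputable def stdCdf (x : ℝ) : ℝ := ∫ u in Set.Iic x, stdPdf u

noncomputable def mvPdf {n : ℕ} (μ : Fin n → ℝ) (S : Matrix (Fin n) (Fin n) ℝ)
    (x : Fin n → ℝ) : ℝ :=
  (Real.sqrt ((2 * Real.pi) ^ n * S.det))⁻¹ *
    Real.exp (-(1 / 2) * ((x - μ) ⬝ᵥ (S⁻¹ *ᵥ (x - μ))))

open ProbabilityTheory Filter Topology
open scoped ENNReal MatrixOrder

lemma stdPdf_eq_gaussianPDFReal : stdPdf = gaussianPDFReal 0 1 := by
  ext x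
  simp [stdPdf, gaussianPDFReal]

lemma integrable_pow_mul_stdPdf (k : ℕ) : Integrable fun x => x ^ k * stdPdf x := by
  have h := (integrable_rpow_mul_exp_neg_mul_sq (b := 1 / 2) (by norm_num) (s := k)
    (by have : (0 : ℝ) ≤ k := k.cast_nonneg
        linarith)).const_mul (√(2 * Real.pi))⁻¹
  refine h.congr (ae_of_all _ fun x => ?_)
  simp only [Real.rpow_natCast, stdPdf]
  rw [show -(1 / 2) * x ^ 2 = -x ^ 2 / 2 by ring]
  ring

lemma hasDerivAt_stdPdf (x : ℝ) : HasDerivAt stdPdf (-(x * stdPdf x)) x := by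
  have h := (((hasDerivAt_pow 2 x).neg.div_const 2).exp).const_mul (√(2 * Real.pi))⁻¹
  refine h.congr_deriv ?_
  simp only [stdPdf, Pi.neg_apply]
  push_cast
  ring

lemma setIntegral_mul_stdPdf (z : ℝ) :
    ∫ x in Set.Iic z, x * stdPdf x = -stdPdf z := by
  have h0 : Integrable stdPdf := by simpa using integrable_pow_mul_stdPdf 0
  have h1 : Integrable fun x => -(x * stdPdf x) := by simpa using (integrable_pow_mul_stdPdf 1).neg
  have := integral_Iic_of_hasDerivAt_of_tendsto' (a := z) (fun x _ => hasDerivAt_stdPdf x)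
    h1.integrableOn (tendsto_zero_of_hasDerivAt_of_integrableOn_Iic (a := z)
      (fun x _ => hasDerivAt_stdPdf x) h1.integrableOn h0.integrableOn)
  rw [integral_neg] at this
  linarith

lemma setIntegral_sq_mul_stdPdf (z : ℝ) :
    ∫ x in Set.Iic z, x ^ 2 * stdPdf x = stdCdf z - z * stdPdf z := by
  have h0 : Integrable stdPdf := by simpa using integrable_pow_mul_stdPdf 0
  have h1 : Integrable fun x => x * stdPdf x := by simpa using integrable_pow_mul_stdPdf 1
  have h2 := integrable_pow_mul_stdPdf 2
  have hd (x : ℝ) : HasDerivAt (fun x => x * stdPdf x) (stdPdf x - x ^ 2 * stdPdf x) x :=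
    ((hasDerivAt_id' x).mul (hasDerivAt_stdPdf x)).congr_deriv (by ring)
  have := integral_Iic_of_hasDerivAt_of_tendsto' (a := z) (fun x _ => hd x)
    (h0.sub h2).integrableOn (tendsto_zero_of_hasDerivAt_of_integrableOn_Iic (a := z)
      (fun x _ => hd x) (h0.sub h2).integrableOn h1.integrableOn)
  rw [integral_sub h0.integrableOn h2.integrableOn] at this
  rw [stdCdf]
  linarith

lemma stdCdf_pos (z : ℝ) : 0 < stdCdf z := by
  have h0 : Integrable stdPdf := by simpa using integrable_pow_mul_stdPdf 0
  have hpos (x : ℝ) : 0 < stdPdf x := by unfold stdPdf; positivity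
  rw [stdCdf, setIntegral_pos_iff_support_of_nonneg_ae (ae_of_all _ fun x => (hpos x).le)
    h0.integrableOn]
  have : Function.support stdPdf = Set.univ := by
    ext x
    simp [(hpos x).ne']
  simp [this]

lemma integral_gaussianReal_indicator_Iic (f : ℝ → ℝ) (z : ℝ) :
    ∫ x, f x * (Set.Iic z).indicator 1 x ∂gaussianReal 0 1 = ∫ x in Set.Iic z, f x * stdPdf x := by
  rw [integral_gaussianReal_eq_integral_smul one_ne_zero, ← integral_indicator measurableSet_Iic]
  refine integral_congr_ae (ae_of_all _ fun x => ?_)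
  by_cases hx : x ∈ Set.Iic z <;> simp [hx, stdPdf_eq_gaussianPDFReal, mul_comm]

lemma stdCdf_eq_integral (z : ℝ) :
    stdCdf z = ∫ x, (Set.Iic z).indicator 1 x ∂gaussianReal 0 1 := by
  simpa [stdCdf] using (integral_gaussianReal_indicator_Iic 1 z).symm

lemma pi_gaussianReal_eq_withDensity (n : ℕ) :
    Measure.pi (fun _ : Fin n => gaussianReal 0 1) =
      volume.withDensity fun x => ENNReal.ofReal (∏ i, stdPdf (x i)) := by
  refine Measure.pi_eq fun s hs => ?_
  have hpos (x : ℝ) : 0 ≤ stdPdf x := by unfold stdPdf; positivity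
  have h0 : Integrable stdPdf := by simpa using integrable_pow_mul_stdPdf 0
  rw [withDensity_apply _ (MeasurableSet.univ_pi hs), volume_pi, Measure.restrict_pi_pi,
    ← ofReal_integral_eq_lintegral_ofReal, integral_fintype_prod_eq_prod,
    ENNReal.ofReal_prod_of_nonneg]
  · refine Finset.prod_congr rfl fun i _ => ?_
    rw [gaussianReal_apply_eq_integral 0 one_ne_zero, stdPdf_eq_gaussianPDFReal]
  · exact fun i _ => integral_nonneg fun x => hpos x
  · exact Integrable.fintype_prod fun i => h0.integrableOn
  · exact ae_of_all _ fun x => Finset.prod_nonneg fun i _ => hpos _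

lemma integral_comp_mulVec {n : ℕ} {A : Matrix (Fin n) (Fin n) ℝ} (hA : A.det ≠ 0)
    {f : (Fin n → ℝ) → ℝ} (hf : Measurable f) :
    ∫ x, f (A *ᵥ x) = |A.det|⁻¹ * ∫ x, f x := by
  have h := integral_map (μ := volume) (φ := toLin' A) (f := f)
    (LinearMap.continuous_of_finiteDimensional _).measurable.aemeasurable
    hf.aestronglyMeasurable
  rw [Real.map_matrix_volume_pi_eq_smul_volume_pi hA, integral_smul_measure] at h
  simpa [abs_inv] using h.symm

lemma mvPdf_add_mulVec {n : ℕ} (μ : Fin n → ℝ) {A : Matrix (Fin n) (Fin n) ℝ} (hA : A.det ≠ 0)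
    (hsymm : A.IsSymm) (x : Fin n → ℝ) :
    mvPdf μ (A * A) (μ + A *ᵥ x) = |A.det|⁻¹ * ∏ i, stdPdf (x i) := by
  have hu : IsUnit A.det := hA.isUnit
  have hq : (A *ᵥ x) ⬝ᵥ ((A * A)⁻¹ *ᵥ (A *ᵥ x)) = ∑ i, x i ^ 2 := by
    rw [mulVec_mulVec, Matrix.mul_inv_rev, Matrix.mul_assoc, nonsing_inv_mul _ hu, Matrix.mul_one,
      dotProduct_mulVec, ← mulVec_transpose, mulVec_mulVec, transpose_nonsing_inv, hsymm.eq,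
      nonsing_inv_mul _ hu, one_mulVec]
    simp [dotProduct, sq]
  simp only [mvPdf, stdPdf, add_sub_cancel_left, hq, det_mul, Finset.prod_mul_distrib,
    ← Real.exp_sum, Finset.prod_const, Finset.card_univ, Fintype.card_fin]
  rw [Real.sqrt_mul (by positivity), Real.sqrt_mul_self_eq_abs, mul_inv, inv_pow,
    Real.sqrt_eq_rpow, Real.sqrt_eq_rpow, ← Real.rpow_natCast, ← Real.rpow_natCast,
    ← Real.rpow_mul (by positivity), ← Real.rpow_mul (by positivity), mul_comm (n : ℝ),
    Finset.mul_sum]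
  rw [show ∀ a b c : ℝ, a * b * c = b * (a * c) by intros; ring]
  congr 3
  exact Finset.sum_congr rfl fun i _ => by ring

lemma measurable_mvPdf {n : ℕ} (μ : Fin n → ℝ) (S : Matrix (Fin n) (Fin n) ℝ) :
    Measurable (mvPdf μ S) := by
  unfold mvPdf
  exact Continuous.measurable (by fun_prop)

lemma integral_mvPdf_mul {n : ℕ} (μ : Fin n → ℝ) {S : Matrix (Fin n) (Fin n) ℝ} (hS : S.PosDef)
    {f : (Fin n → ℝ) → ℝ} (hf : Measurable f) :
    ∫ m, mvPdf μ S m * f m = ∫ x, f (μ + x.ofLp) ∂multivariateGaussian 0 S := by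
  set A := CFC.sqrt S
  have hAA : A * A = S := CFC.sqrt_mul_sqrt_self _ hS.posSemidef.nonneg
  have hA : A.det ≠ 0 := by
    intro h
    have := hS.det_pos
    rw [← hAA, det_mul, h] at this
    simp at this
  have hsymm : A.IsSymm := by
    have : IsSelfAdjoint A := (CFC.sqrt_nonneg S).isSelfAdjoint
    simpa [IsSymm, IsSelfAdjoint, star_eq_conjTranspose,
      conjTranspose_eq_transpose_of_trivial] using this
  have hf' : Measurable fun x : EuclideanSpace ℝ (Fin n) => f (μ + x.ofLp) := hf.comp (by fun_prop)
  have hf'' : Measurable fun x : EuclideanSpace ℝ (Fin n) =>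
      f (μ + (0 + toEuclideanCLM (𝕜 := ℝ) A x).ofLp) := hf.comp (by fun_prop)
  rw [multivariateGaussian, integral_map (by fun_prop) hf'.aestronglyMeasurable,
    ← map_pi_eq_stdGaussian, integral_map (by fun_prop) hf''.aestronglyMeasurable]
  simp only [zero_add, ofLp_toEuclideanCLM]
  rw [pi_gaussianReal_eq_withDensity, integral_withDensity_eq_integral_toReal_smul
    (by unfold stdPdf; fun_prop) (ae_of_all _ fun _ => ENNReal.ofReal_lt_top)]
  have hF : Measurable fun x => mvPdf μ S (μ + x) * f (μ + x) :=
    ((measurable_mvPdf μ S).mul hf).comp (measurable_const_add μ)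
  rw [← integral_add_left_eq_self _ μ, ← mul_right_inj' (inv_ne_zero (abs_ne_zero.2 hA)),
    ← integral_comp_mulVec hA hF, ← integral_const_mul]
  refine integral_congr_ae (ae_of_all _ fun x => ?_)
  have hpos : 0 ≤ ∏ i, stdPdf (x i) :=
    Finset.prod_nonneg fun i _ => by unfold stdPdf; positivity
  simp only [smul_eq_mul, ENNReal.toReal_ofReal hpos]
  rw [← hAA, mvPdf_add_mulVec μ hA hsymm, mul_assoc]

/-- Moments of a Gaussian vector `X` truncated by a threshold on a jointly Gaussian standard
variable `G`, obtained from the decomposition of `X` along `G`. -/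
lemma integral_mul_indicator_of_hasGaussianLaw {Ω : Type*} [MeasurableSpace Ω] {P : Measure Ω}
    {n : ℕ} {X : Fin n → Ω → ℝ} {G : Ω → ℝ}
    (hXG : HasGaussianLaw (fun ω => ((fun i => X i ω), G ω)) P)
    (hX0 : ∀ i, P[X i] = 0) (hG : P.map G = gaussianReal 0 1) (i j : Fin n) (c z : ℝ) :
    ∫ ω, (X i ω + cov[X i, G; P] * c) * (X j ω + cov[X j, G; P] * c) *
        (Set.Iic z).indicator 1 (G ω) ∂P =
      (cov[X i, X j; P] - cov[X i, G; P] * cov[X j, G; P]) * stdCdf z +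
        cov[X i, G; P] * cov[X j, G; P] *
          (stdCdf z - z * stdPdf z - 2 * c * stdPdf z + c ^ 2 * stdCdf z) := by
  have := hXG.isProbabilityMeasure
  have hXL (k) : HasGaussianLaw (X k) P := hXG.fst.eval k
  have hGL : HasGaussianLaw G P := hXG.snd
  have hX2 (k) : MemLp (X k) 2 P := (hXL k).memLp_two
  have hG2 : MemLp G 2 P := hGL.memLp_two
  have hGm : AEMeasurable G P := hGL.aemeasurable
  have hvar : cov[G, G; P] = 1 := by
    rw [covariance_self hGm]
    have := variance_map (X := id) (Y := G) (μ := P) aemeasurable_id hGm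
    rw [hG, variance_id_gaussianReal] at this
    simpa using this.symm
  have hG0 : P[G] = 0 := by
    have := integral_map (f := id) hGm aestronglyMeasurable_id
    rw [hG] at this
    simpa using this.symm
  set g : Fin n → ℝ := fun k => cov[X k, G; P] with hg
  set R : Fin n → Ω → ℝ := fun k ω => X k ω - g k * G ω with hR
  have hR2 (k) : MemLp (R k) 2 P := (hX2 k).sub (hG2.const_mul _)
  have hR0 (k) : ∫ ω, R k ω ∂P = 0 := by
    rw [hR, integral_sub ((hX2 k).integrable one_le_two)
      ((hG2.integrable one_le_two).const_mul _), integral_const_mul, hG0, hX0]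
    simp
  have hRG (k) : cov[R k, G; P] = 0 := by
    rw [hR, covariance_fun_sub_left (hX2 k) (hG2.const_mul _) hG2, covariance_const_mul_left, hvar]
    simp [hg]
  have hRR : ∫ ω, R i ω * R j ω ∂P = cov[X i, X j; P] - g i * g j := by
    have h := covariance_eq_sub (hR2 i) (hR2 j)
    rw [hR0, zero_mul, sub_zero] at h
    rw [show ∫ ω, R i ω * R j ω ∂P = P[R i * R j] from rfl, ← h]
    rw [show R i = fun ω => X i ω - g i * G ω from rfl,
      covariance_fun_sub_left (hX2 i) (hG2.const_mul _) (hR2 j), covariance_const_mul_left,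
      covariance_comm G, hRG, show R j = fun ω => X j ω - g j * G ω from rfl,
      covariance_fun_sub_right (hX2 i) (hX2 j) (hG2.const_mul _), covariance_const_mul_right]
    simp [hg, mul_comm]
  have hind : IndepFun (fun ω k => R k ω) (fun ω (_ : Unit) => G ω) P := by
    refine HasGaussianLaw.indepFun_of_covariance_eval ?_ fun k _ => hRG k
    let L : ((Fin n → ℝ) × ℝ) →L[ℝ] ((Fin n → ℝ) × (Unit → ℝ)) :=
      (ContinuousLinearMap.fst ℝ (Fin n → ℝ) ℝ -
        (ContinuousLinearMap.snd ℝ (Fin n → ℝ) ℝ).smulRight g).prod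
          (ContinuousLinearMap.pi fun _ => ContinuousLinearMap.snd ℝ (Fin n → ℝ) ℝ)
    convert! hXG.map L using 1
    ext ω k <;> simp [L, hR, mul_comm]
  have hprod {φ : (Fin n → ℝ) → ℝ} {ψ : ℝ → ℝ} (hφ : Measurable φ) (hψ : Measurable ψ) :
      ∫ ω, φ (fun k => R k ω) * ψ (G ω) ∂P =
        (∫ ω, φ (fun k => R k ω) ∂P) * ∫ x, ψ x ∂gaussianReal 0 1 := by
    have h := (hind.comp hφ (hψ.comp (measurable_pi_apply ()))).integral_fun_mul_eq_mul_integral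
      (hφ.comp_aemeasurable (aemeasurable_pi_lambda _ fun k =>
        (hR2 k).aestronglyMeasurable.aemeasurable)).aestronglyMeasurable
      (hψ.comp_aemeasurable hGm).aestronglyMeasurable
    rw [← hG, integral_map hGm hψ.aestronglyMeasurable]
    exact h
  have hIm : Measurable ((Set.Iic z).indicator (1 : ℝ → ℝ)) :=
    measurable_one.indicator measurableSet_Iic
  have hbdd (x : ℝ) : ‖(Set.Iic z).indicator (1 : ℝ → ℝ) x‖ ≤ 1 := by
    by_cases hx : x ∈ Set.Iic z <;> simp [hx]
  have hI {f : Ω → ℝ} (hf : Integrable f P) :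
      Integrable (fun ω => f ω * (Set.Iic z).indicator 1 (G ω)) P :=
    hf.mul_bdd (c := 1) (hIm.comp_aemeasurable hGm).aestronglyMeasurable (ae_of_all _ fun ω => hbdd _)
  have hGc2 : MemLp (fun ω => G ω + c) 2 P := hG2.add (memLp_const c)
  have hsplit : ∀ ω, (X i ω + g i * c) * (X j ω + g j * c) * (Set.Iic z).indicator 1 (G ω) =
      R i ω * R j ω * (Set.Iic z).indicator 1 (G ω)
      + g j * (R i ω * ((G ω + c) * (Set.Iic z).indicator 1 (G ω)))
      + g i * (R j ω * ((G ω + c) * (Set.Iic z).indicator 1 (G ω)))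
      + g i * g j * ((G ω + c) ^ 2 * (Set.Iic z).indicator 1 (G ω)) := by
    intro ω
    simp only [hR]
    ring
  have hRi (k) : ∫ ω, R k ω * ((G ω + c) * (Set.Iic z).indicator 1 (G ω)) ∂P = 0 := by
    have := hprod (φ := fun r => r k) (ψ := fun x => (x + c) * (Set.Iic z).indicator 1 x)
      (by fun_prop) ((measurable_id.add_const c).mul hIm)
    simpa [hR0] using this
  have hRij : ∫ ω, R i ω * R j ω * (Set.Iic z).indicator 1 (G ω) ∂P =
      (cov[X i, X j; P] - g i * g j) * stdCdf z := by
    rw [hprod (φ := fun r => r i * r j) (by fun_prop) hIm, hRR, stdCdf_eq_integral]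
  have hinteg (k) : Integrable (fun ω => R k ω * ((G ω + c) * (Set.Iic z).indicator 1 (G ω))) P := by
    simpa [mul_assoc] using hI ((hR2 k).integrable_mul hGc2)
  have hGG : ∫ ω, (G ω + c) ^ 2 * (Set.Iic z).indicator 1 (G ω) ∂P =
      stdCdf z - z * stdPdf z - 2 * c * stdPdf z + c ^ 2 * stdCdf z := by
    have h := integral_map (f := fun x => (x + c) ^ 2 * (Set.Iic z).indicator 1 x) hGm
      (((measurable_id.add_const c).pow_const 2).mul hIm).aestronglyMeasurable
    have h0 : Integrable stdPdf := by simpa using integrable_pow_mul_stdPdf 0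
    have h1 : Integrable fun x => x * stdPdf x := by simpa using integrable_pow_mul_stdPdf 1
    have h2 := integrable_pow_mul_stdPdf 2
    rw [← h, hG, integral_gaussianReal_indicator_Iic (fun x => (x + c) ^ 2)]
    have e : ∀ x, (x + c) ^ 2 * stdPdf x =
        x ^ 2 * stdPdf x + 2 * c * (x * stdPdf x) + c ^ 2 * stdPdf x := fun x => by ring
    simp_rw [e]
    rw [integral_add, integral_add, integral_const_mul, integral_const_mul,
      setIntegral_mul_stdPdf, setIntegral_sq_mul_stdPdf, ← stdCdf]
    · ring
    · exact h2.integrableOn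
    · exact (h1.const_mul _).integrableOn
    · exact (h2.add (h1.const_mul _)).integrableOn
    · exact (h0.const_mul _).integrableOn
  rw [integral_congr_ae (ae_of_all _ hsplit)]
  rw [integral_add, integral_add, integral_add, integral_const_mul, integral_const_mul,
    integral_const_mul, hRi, hRi, hRij, hGG]
  · ring
  · exact hI ((hR2 i).integrable_mul (hR2 j))
  · exact (hinteg i).const_mul _
  · exact (hI ((hR2 i).integrable_mul (hR2 j))).add ((hinteg i).const_mul _)
  · exact (hinteg j).const_mul _
  · exact ((hI ((hR2 i).integrable_mul (hR2 j))).add ((hinteg i).const_mul _)).add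
      ((hinteg j).const_mul _)
  · exact (hI hGc2.integrable_sq).const_mul _

lemma monotone_stdCdf : Monotone stdCdf := fun a b hab =>
  setIntegral_mono_set (by simpa using (integrable_pow_mul_stdPdf 0).integrableOn)
    (ae_of_all _ fun x => by simp only [stdPdf, Pi.zero_apply]; positivity)
    (Set.Iic_subset_Iic.2 hab).eventuallyLE

/-- The normalized linear combination of a vector and an independent noise whose sublevel set
`{G ≤ z}` represents the probit factor. -/
noncomputable def probitNoise {n : ℕ} (v : Fin n → ℝ) (y σ : ℝ)
    (ω : EuclideanSpace ℝ (Fin n) × ℝ) : ℝ :=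
  σ⁻¹ * (ω.2 - y * ∑ k, v k * ω.1 k)

section

variable {n : ℕ} {S : Matrix (Fin n) (Fin n) ℝ} (v : Fin n → ℝ) (y σ : ℝ)

lemma integral_mvPdf_mul_mul_stdCdf (hS : S.PosDef) {σ : ℝ} (hσ : 0 < σ) (μ : Fin n → ℝ)
    {f : (Fin n → ℝ) → ℝ} (hf : Measurable f)
    (hfi : Integrable (fun x => f (μ + x.ofLp)) (multivariateGaussian 0 S)) :
    ∫ m, mvPdf μ S m * (f m * stdCdf (y * (v ⬝ᵥ m))) =
      ∫ ω, f (μ + ω.1.ofLp) * (Set.Iic (y * (v ⬝ᵥ μ) / σ)).indicator 1 (probitNoise v y σ ω)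
        ∂(multivariateGaussian 0 S).prod (gaussianReal 0 1) := by
  have hcdf : Measurable fun m : Fin n → ℝ => stdCdf (y * (v ⬝ᵥ m)) :=
    monotone_stdCdf.measurable.comp (Continuous.measurable (by fun_prop))
  have hGm : Measurable (probitNoise v y σ) := by unfold probitNoise; fun_prop
  have hIm (z : ℝ) : Measurable ((Set.Iic z).indicator (1 : ℝ → ℝ)) :=
    measurable_one.indicator measurableSet_Iic
  have hbdd (z x : ℝ) : ‖(Set.Iic z).indicator (1 : ℝ → ℝ) x‖ ≤ 1 := by
    by_cases hx : x ∈ Set.Iic z <;> simp [hx]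
  rw [integral_mvPdf_mul (f := fun m => f m * stdCdf (y * (v ⬝ᵥ m))) μ hS (hf.mul hcdf),
    integral_prod]
  · refine integral_congr_ae (ae_of_all _ fun x => ?_)
    simp only
    rw [integral_const_mul, stdCdf_eq_integral]
    congr 1
    refine integral_congr_ae (ae_of_all _ fun u => ?_)
    simp only [Set.indicator_apply, Set.mem_Iic]
    congr 1
    rw [probitNoise, inv_mul_eq_div, div_le_div_iff_of_pos_right hσ, sub_le_iff_le_add,
      dotProduct_add, mul_add]
    rfl
  · exact (hfi.comp_fst _).mul_bdd (c := 1) ((hIm _).comp hGm).aestronglyMeasurable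
      (ae_of_all _ fun ω => hbdd _ _)

lemma covariance_fst_fst (hS : S.PosSemidef) (i j : Fin n) :
    cov[fun ω => ω.1 i, fun ω => ω.1 j;
      (multivariateGaussian 0 S).prod (gaussianReal 0 1)] = S i j := by
  have h := covariance_map_fun (μ := (multivariateGaussian 0 S).prod (gaussianReal 0 1))
    (Z := Prod.fst) (X := fun x : EuclideanSpace ℝ (Fin n) => x i)
    (Y := fun x : EuclideanSpace ℝ (Fin n) => x j)
    (by fun_prop) (by fun_prop) (by fun_prop)
  rw [← h, Measure.map_fst_prod, measure_univ, one_smul,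
    covariance_eval_multivariateGaussian hS]

lemma memLp_fst (i : Fin n) :
    MemLp (fun ω : EuclideanSpace ℝ (Fin n) × ℝ => ω.1 i) 2
      ((multivariateGaussian 0 S).prod (gaussianReal 0 1)) :=
  (IsGaussian.hasGaussianLaw_id.map_fun ((EuclideanSpace.proj i).comp
    (ContinuousLinearMap.fst ℝ (EuclideanSpace ℝ (Fin n)) ℝ))).memLp_two

lemma memLp_snd :
    MemLp (fun ω : EuclideanSpace ℝ (Fin n) × ℝ => ω.2) 2
      ((multivariateGaussian 0 S).prod (gaussianReal 0 1)) :=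
  (IsGaussian.hasGaussianLaw_id.map_fun
    (ContinuousLinearMap.snd ℝ (EuclideanSpace ℝ (Fin n)) ℝ)).memLp_two

lemma covariance_fst_snd (i : Fin n) :
    cov[fun ω => ω.1 i, fun ω => ω.2;
      (multivariateGaussian 0 S).prod (gaussianReal 0 1)] = 0 :=
  (indepFun_prod (X := fun x : EuclideanSpace ℝ (Fin n) => x i) (Y := fun x : ℝ => x)
    (by fun_prop) measurable_id).covariance_eq_zero (memLp_fst i) memLp_snd

lemma covariance_snd_snd :
    cov[fun ω => ω.2, fun ω => ω.2;
      (multivariateGaussian 0 S).prod (gaussianReal 0 1)] = 1 := by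
  have h := covariance_map_fun (μ := (multivariateGaussian 0 S).prod (gaussianReal 0 1))
    (Z := Prod.snd) (X := fun x : ℝ => x) (Y := fun x : ℝ => x)
    (by fun_prop) (by fun_prop) (by fun_prop)
  rw [← h, Measure.map_snd_prod, measure_univ, one_smul, covariance_self (by fun_prop)]
  simp

lemma memLp_const_mul_sum :
    MemLp (fun ω : EuclideanSpace ℝ (Fin n) × ℝ => y * ∑ k, v k * ω.1 k) 2
      ((multivariateGaussian 0 S).prod (gaussianReal 0 1)) :=
  (memLp_finsetSum _ fun k _ => (memLp_fst k).const_mul (v k)).const_mul y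

lemma hasGaussianLaw_probitNoise :
    HasGaussianLaw (fun ω : EuclideanSpace ℝ (Fin n) × ℝ =>
      ((fun i => ω.1 i), probitNoise v y σ ω))
      ((multivariateGaussian 0 S).prod (gaussianReal 0 1)) := by
  let F := ContinuousLinearMap.fst ℝ (EuclideanSpace ℝ (Fin n)) ℝ
  let L : (EuclideanSpace ℝ (Fin n) × ℝ) →L[ℝ] ((Fin n → ℝ) × ℝ) :=
    (ContinuousLinearMap.pi fun i => (EuclideanSpace.proj i).comp F).prod
      (σ⁻¹ • (ContinuousLinearMap.snd ℝ (EuclideanSpace ℝ (Fin n)) ℝ -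
        y • ∑ k, v k • (EuclideanSpace.proj k).comp F))
  have h : HasGaussianLaw id ((multivariateGaussian 0 S).prod (gaussianReal 0 1)) :=
    IsGaussian.hasGaussianLaw_id
  convert! h.map L using 1
  ext ω <;> simp [L, F, probitNoise]

lemma covariance_fst_probitNoise (hS : S.PosSemidef) (i : Fin n) :
    cov[fun ω => ω.1 i, probitNoise v y σ;
      (multivariateGaussian 0 S).prod (gaussianReal 0 1)] = -(y * (S *ᵥ v) i / σ) := by
  unfold probitNoise
  rw [covariance_const_mul_right,
    covariance_fun_sub_right (memLp_fst i) memLp_snd (memLp_const_mul_sum v y),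
    covariance_fst_snd, covariance_const_mul_right,
    covariance_fun_sum_right (fun k => (memLp_fst k).const_mul (v k)) (memLp_fst i)]
  simp only [covariance_const_mul_right, covariance_fst_fst hS, mulVec, dotProduct]
  rw [Finset.sum_congr rfl fun k _ => mul_comm (v k) (S i k)]
  ring

lemma integral_fst (i : Fin n) :
    ∫ ω, ω.1 i ∂(multivariateGaussian 0 S).prod (gaussianReal 0 1) = 0 := by
  rw [integral_fun_fst (f := fun x : EuclideanSpace ℝ (Fin n) => x i)]
  have h := (EuclideanSpace.proj (𝕜 := ℝ) i).integral_comp_comm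
    (μ := multivariateGaussian 0 S) (φ := fun x : EuclideanSpace ℝ (Fin n) => x)
    (IsGaussian.integrable_id)
  rw [integral_id_multivariateGaussian] at h
  simpa using h

lemma map_probitNoise (hS : S.PosSemidef) (hσ : 0 < σ)
    (h : y ^ 2 * (v ⬝ᵥ (S *ᵥ v)) + 1 = σ ^ 2) :
    ((multivariateGaussian 0 S).prod (gaussianReal 0 1)).map (probitNoise v y σ) =
      gaussianReal 0 1 := by
  have hL := (hasGaussianLaw_probitNoise (S := S) v y σ).snd
  have hG2 : MemLp (probitNoise v y σ) 2
    ((multivariateGaussian 0 S).prod (gaussianReal 0 1)) := hL.memLp_two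
  have hsum := memLp_const_mul_sum (S := S) v y
  have hmean : ∫ ω, probitNoise v y σ ω ∂(multivariateGaussian 0 S).prod (gaussianReal 0 1) = 0 := by
    unfold probitNoise
    rw [integral_const_mul, integral_sub (memLp_snd.integrable one_le_two)
      (hsum.integrable one_le_two), integral_const_mul,
      integral_finsetSum _ fun k _ => ((memLp_fst k).integrable one_le_two).const_mul (v k)]
    simp only [integral_const_mul, integral_fst]
    rw [integral_fun_snd (f := fun x : ℝ => x)]
    simp
  have hsnd : cov[fun ω => ω.2, probitNoise v y σ;
      (multivariateGaussian 0 S).prod (gaussianReal 0 1)] = σ⁻¹ := by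
    unfold probitNoise
    rw [covariance_const_mul_right, covariance_fun_sub_right memLp_snd memLp_snd hsum,
      covariance_snd_snd, covariance_const_mul_right,
      covariance_fun_sum_right (fun k => (memLp_fst k).const_mul (v k)) memLp_snd]
    simp [covariance_const_mul_left,
      covariance_comm (fun ω : EuclideanSpace ℝ (Fin n) × ℝ => ω.2), covariance_fst_snd]
  have hvar : Var[probitNoise v y σ; (multivariateGaussian 0 S).prod (gaussianReal 0 1)] = 1 := by
    rw [← covariance_self hG2.aestronglyMeasurable.aemeasurable]
    nth_rw 1 [show probitNoise (n := n) v y σ =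
      fun ω => σ⁻¹ * (ω.2 - y * ∑ k, v k * ω.1 k) from rfl]
    rw [covariance_const_mul_left, covariance_fun_sub_left memLp_snd hsum hG2, hsnd,
      covariance_const_mul_left,
      covariance_fun_sum_left (fun k => (memLp_fst k).const_mul (v k)) hG2]
    simp only [covariance_const_mul_left, covariance_fst_probitNoise v y σ hS]
    have e : ∑ k, v k * -(y * (S *ᵥ v) k / σ) = -(y / σ * (v ⬝ᵥ (S *ᵥ v))) := by
      rw [dotProduct, Finset.mul_sum, ← Finset.sum_neg_distrib]
      exact Finset.sum_congr rfl fun k _ => by ring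
    rw [e]
    field_simp
    linarith
  have := hL.map_eq_gaussianReal
  rw [hmean, hvar] at this
  simpa using this

end

/-- Covariance of the probit-tilted posterior `p(m) ∝ φ(m; μ, Σ)Φ(y v'm)` equals
`Σ − (μ⁺−μ)(μ⁺−μ)' − y Σvv'Σ φ(z)(v'μ)/(η (v'Σv+1)^{3/2})`, where `μ⁺` is the
posterior mean `μ + yΣv φ(z)/(η√(v'Σv+1))`. -/
theorem stmt14 {n : ℕ} (μ : Fin n → ℝ) (S : Matrix (Fin n) (Fin n) ℝ)
    (hS : S.PosDef) (v : Fin n → ℝ) (hv : ∃ i, v = Pi.single i 1)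
    (y : ℝ) (hy : y = -1 ∨ y = 1)
    (z : ℝ) (hz : z = y * (v ⬝ᵥ μ) / Real.sqrt (v ⬝ᵥ (S *ᵥ v) + 1))
    (η : ℝ) (hη : η = stdCdf z)
    (Z : ℝ) (hZ : Z = ∫ m : Fin n → ℝ, mvPdf μ S m * stdCdf (y * (v ⬝ᵥ m)))
    (p : (Fin n → ℝ) → ℝ)
    (hp : p = fun m => Z⁻¹ * mvPdf μ S m * stdCdf (y * (v ⬝ᵥ m)))
    (μplus : Fin n → ℝ)
    (hμplus : μplus = μ + (y * stdPdf z / (η * Real.sqrt (v ⬝ᵥ (S *ᵥ v) + 1))) • (S *ᵥ v)) :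
    ∀ i j, (∫ m : Fin n → ℝ, (m i - μplus i) * (m j - μplus j) * p m) =
      S i j - (μplus i - μ i) * (μplus j - μ j) -
        y * (S *ᵥ v) i * (vecMul v S) j * stdPdf z * (v ⬝ᵥ μ) /
          (η * (v ⬝ᵥ (S *ᵥ v) + 1) ^ ((3 : ℝ) / 2)) := by
  intro i j
  have hvS : 0 ≤ v ⬝ᵥ (S *ᵥ v) := by simpa using hS.posSemidef.dotProduct_mulVec_nonneg v
  set q := v ⬝ᵥ (S *ᵥ v) with hq
  set σ := √(q + 1) with hσ_def
  have hσ : 0 < σ := Real.sqrt_pos.2 (by linarith)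
  have hσ2 : σ ^ 2 = q + 1 := Real.sq_sqrt (by linarith)
  have hσ3 : (q + 1) ^ ((3 : ℝ) / 2) = σ ^ 3 := by
    rw [hσ_def, Real.sqrt_eq_rpow, ← Real.rpow_natCast, ← Real.rpow_mul (by linarith)]
    norm_num
  have hy2 : y ^ 2 = 1 := by rcases hy with rfl | rfl <;> norm_num
  have hη0 : 0 < η := hη ▸ stdCdf_pos z
  have hsymm : vecMul v S j = (S *ᵥ v) j := by
    rw [← mulVec_transpose, ← conjTranspose_eq_transpose_of_trivial, hS.isHermitian.eq]
  have hmap := map_probitNoise v y σ hS.posSemidef hσ (by rw [hy2, hσ2, one_mul])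
  have hGm : Measurable (probitNoise v y σ) := by unfold probitNoise; fun_prop
  have hZη : Z = η := by
    have h := integral_mvPdf_mul_mul_stdCdf v y hS hσ μ (f := fun _ => 1) measurable_const
      (integrable_const _)
    simp only [one_mul] at h
    have h' := integral_map (μ := (multivariateGaussian 0 S).prod (gaussianReal 0 1))
      (f := (Set.Iic z).indicator (1 : ℝ → ℝ)) hGm.aemeasurable
      (measurable_one.indicator measurableSet_Iic).aestronglyMeasurable
    rw [hZ, h, hη, stdCdf_eq_integral, ← hz, ← h', hmap]
  set c := stdPdf z / η with hc
  have hg (k) := covariance_fst_probitNoise v y σ hS.posSemidef k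
  have hcenter (k) (x : Fin n → ℝ) : (μ + x) k - μplus k =
      x k + cov[fun ω => ω.1 k, probitNoise v y σ;
        (multivariateGaussian 0 S).prod (gaussianReal 0 1)] * c := by
    rw [hg, hμplus, hc]
    simp only [Pi.add_apply, Pi.smul_apply, smul_eq_mul]
    field_simp
    ring
  have hmem (k) : MemLp (fun x : EuclideanSpace ℝ (Fin n) => (μ + x.ofLp) k - μplus k) 2
      (multivariateGaussian 0 S) := by
    simp_rw [hcenter]
    exact (IsGaussian.hasGaussianLaw_id.map_fun (EuclideanSpace.proj k)).memLp_two.add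
      (memLp_const _)
  have hmoment := integral_mul_indicator_of_hasGaussianLaw
    (hasGaussianLaw_probitNoise (S := S) v y σ) integral_fst hmap i j c z
  have htilt := integral_mvPdf_mul_mul_stdCdf v y hS hσ μ
    (f := fun m => (m i - μplus i) * (m j - μplus j)) (by fun_prop)
    ((hmem i).integrable_mul (hmem j))
  simp only [hcenter] at htilt
  rw [← hz, hmoment, covariance_fst_fst hS.posSemidef, hg, hg, ← hη] at htilt
  have hinteg : ∫ m, (m i - μplus i) * (m j - μplus j) * p m = η⁻¹ *
      ∫ m, mvPdf μ S m * ((m i - μplus i) * (m j - μplus j) * stdCdf (y * (v ⬝ᵥ m))) := by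
    rw [← integral_const_mul, hp, hZη]
    exact integral_congr_ae (ae_of_all _ fun m => by ring)
  have hshift (k) : μplus k - μ k = y * c * (S *ᵥ v) k / σ := by
    rw [hμplus, hc]
    simp only [Pi.add_apply, Pi.smul_apply, smul_eq_mul]
    field_simp
    ring
  rw [hinteg, htilt, hshift, hshift, hsymm, hσ3]
  have hzv : v ⬝ᵥ μ = y * z * σ := by
    rw [hz]
    field_simp
    rw [hy2, mul_one]
  rw [hzv, hc]
  rcases hy with rfl | rfl <;> field_simp <;> ring
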